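/- arXiv:2308.03071 — 2 statements merged into one kernel-verified Lean document; each statement's English description precedes it below -/
import Mathlib

section
/- Let d ≥ 2. For every unimodular lattice Λ ⊆ K̃^d there exists a = (a₁,…,a_d) ∈ ℝ^d with a₁ + … + a_d = 0 such that λ_{1,a}(Λ) = λ_{2,a}(Λ) = … = λ_{d,a}(Λ), i.e. the Minkowski flag of Λ with respect to the norm ‖·‖_a is trivial. -/
noncomputable section

open scoped Classical

variable (Fq : Type) [Field Fq] [Fintype Fq]

/-- `K̃ = 𝔽_q((x⁻¹))`, realized as formal Laurent series in `t = x⁻¹`. -/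
abbrev Kt := LaurentSeries Fq

/-- The element `x` of `K̃` (the inverse of the Laurent series variable). -/
def Kx : Kt Fq := HahnSeries.single (-1 : ℤ) 1

/-- Absolute value `|f| = q^{deg f}`, i.e. `q^{-order f}` in terms of `t = x⁻¹`. -/
def Kabs (f : Kt Fq) : ℝ := if f = 0 then 0 else (Fintype.card Fq : ℝ) ^ (-f.order)

/-- The ring embedding of `R = 𝔽_q[x]` into `K̃`. -/
def polyK : Polynomial Fq →+* Kt Fq := (Polynomial.aeval (Kx Fq)).toRingHom

/-- Sup norm on `K̃^d`. -/
def vnorm {d : ℕ} (v : Fin d → Kt Fq) : ℝ := ⨆ i, Kabs Fq (v i)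

/-- The lattice `g·R^d`. -/
def lattice {d : ℕ} (g : Matrix (Fin d) (Fin d) (Kt Fq)) : Set (Fin d → Kt Fq) :=
  {v | ∃ c : Fin d → Polynomial Fq, v = g.mulVec fun j => polyK Fq (c j)}

/-- `i`-th successive minimum of `Λ` with respect to a norm `nrm`: the least `r > 0` such that
`Λ` contains `i` linearly independent vectors of norm at most `r`. -/
def minimaN {d : ℕ} (nrm : (Fin d → Kt Fq) → ℝ) (Λ : Set (Fin d → Kt Fq)) (i : ℕ) : ℝ :=
  sInf {r : ℝ | 0 < r ∧ ∃ v : Fin i → Fin d → Kt Fq,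
    (∀ j, v j ∈ Λ) ∧ LinearIndependent (Kt Fq) v ∧ ∀ j, nrm (v j) ≤ r}

/-- `i`-th successive minimum with respect to the sup norm. -/
def minima {d : ℕ} (Λ : Set (Fin d → Kt Fq)) (i : ℕ) : ℝ := minimaN Fq (vnorm Fq) Λ i

/-- Covering radius of `Λ` with respect to the norm `nrm`. -/
def covRad {d : ℕ} (nrm : (Fin d → Kt Fq) → ℝ) (Λ : Set (Fin d → Kt Fq)) : ℝ :=
  ⨆ w : Fin d → Kt Fq, ⨅ u : Λ, nrm (w - u.1)

/-- Length of the shortest nonzero vector of `Λ`. -/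
def ell {d : ℕ} (Λ : Set (Fin d → Kt Fq)) : ℝ :=
  sInf {r : ℝ | ∃ v ∈ Λ, v ≠ 0 ∧ vnorm Fq v = r}

/-- `Λ` is well rounded: it contains `d` linearly independent vectors of norm `ℓ(Λ)`. -/
def IsWellRounded {d : ℕ} (Λ : Set (Fin d → Kt Fq)) : Prop :=
  ∃ v : Fin d → Fin d → Kt Fq, (∀ j, v j ∈ Λ) ∧ LinearIndependent (Kt Fq) v ∧
    ∀ j, vnorm Fq (v j) = ell Fq Λ

/-- The multiplicative "norm" `N(v) = ∏ |v i|`. -/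
def Nprod {d : ℕ} (v : Fin d → Kt Fq) : ℝ := ∏ i, Kabs Fq (v i)

/-- The Minkowski function `μ(Λ) = sup_w inf_{u ∈ Λ} N(w - u)`. -/
def mink {d : ℕ} (Λ : Set (Fin d → Kt Fq)) : ℝ :=
  ⨆ w : Fin d → Kt Fq, ⨅ u : Λ, Nprod Fq (w - u.1)

/-- The twisted norm `‖v‖_a = max_i q^{a_i}·|v_i|` for `a ∈ ℝ^d`. -/
def anorm {d : ℕ} (a : Fin d → ℝ) (v : Fin d → Kt Fq) : ℝ :=
  ⨆ i, (Fintype.card Fq : ℝ) ^ a i * Kabs Fq (v i)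

/-!
Weight the coordinates by `b ∈ ℤ^d` and let `L(b)` be the set of lattice vectors `v` with
`|v i| ≤ q^{-b i}` for all `i`. If `L(b)` spans `K̃^d`, then `d` independent vectors of `L(b)` have
as determinant a nonzero polynomial times `det g`, so `|det g| ≤ q^{-∑ b i}`. Hence there is a
spanning `L(b)` with `∑ b i` maximal.

For such a `b`, no nonzero lattice vector `w` satisfies `|w i| < q^{-b i}` for all `i`. Otherwise
choose `k` maximal with `|w i| ≤ q^{-b i - k}` for all `i`, and `i` attaining equality. Any
`v ∈ L(b)` is `(v - c x^k w) + c x^k w`, where `c ∈ 𝔽_q` cancels the term of `v i` of degree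
`-b i`; as `w` and `v - c x^k w` have `i`-th coordinate smaller than `q^{-b i}`, raising `b i` by
one keeps `L(b)` spanning.

So all successive minima for the weights `b` are `1`, and subtracting from `b` its mean makes
the weights sum to zero while it scales the norm by a constant.
-/

section Span

variable {K V : Type*} [DivisionRing K] [AddCommGroup V] [Module K V] [FiniteDimensional K V]

theorem exists_fun_fin_linearIndependent_of_span_eq_top {n : ℕ} (hn : Module.finrank K V = n)
    {S : Set V} (hS : Submodule.span K S = ⊤) :
    ∃ v : Fin n → V, (∀ j, v j ∈ S) ∧ LinearIndependent K v := by
  have h := Submodule.exists_fun_fin_finrank_span_eq K S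
  rw [hS, finrank_top, hn] at h
  obtain ⟨v, hvS, -, hli⟩ := h
  exact ⟨v, hvS, hli⟩

end Span

section Valuation

variable {R Γ₀ : Type*} [CommRing R] [LinearOrderedAddCommMonoidWithTop Γ₀]
  (v : AddValuation R Γ₀)

theorem sum_le_addValuation_prod {ι : Type*} {s : Finset ι} {b : ι → Γ₀} {f : ι → R}
    (h : ∀ i ∈ s, b i ≤ v (f i)) : ∑ i ∈ s, b i ≤ v (∏ i ∈ s, f i) := by
  induction s using Finset.cons_induction with
  | empty => simp
  | cons i s hi ih =>
    rw [Finset.sum_cons, Finset.prod_cons, v.map_mul]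
    exact add_le_add (h i (Finset.mem_cons_self i s))
      (ih fun j hj ↦ h j (Finset.mem_cons_of_mem hj))

theorem sum_le_addValuation_det {n : Type*} [Fintype n] [DecidableEq n] {b : n → Γ₀}
    {M : Matrix n n R} (h : ∀ i j, b j ≤ v (M i j)) : ∑ j, b j ≤ v M.det := by
  rw [Matrix.det_apply]
  refine v.map_le_sum fun σ _ ↦ ?_
  have hprod : ∑ j, b j ≤ v (∏ j, M (σ j) j) := sum_le_addValuation_prod v fun j _ ↦ h (σ j) j
  rcases Int.units_eq_one_or σ.sign with hσ | hσ
  · rwa [hσ, one_smul]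
  · rwa [hσ, Units.neg_smul, one_smul, v.map_neg]

end Valuation

section OrderTop

variable {R : Type*} [Zero R]

theorem add_one_le_orderTop_iff {f : LaurentSeries R} {n : ℤ} :
    ((n + 1 : ℤ) : WithTop ℤ) ≤ f.orderTop ↔ (n : WithTop ℤ) ≤ f.orderTop ∧ f.coeff n = 0 := by
  simp only [HahnSeries.le_orderTop_iff_forall, WithTop.coe_lt_coe, Int.lt_add_one_iff]
  refine ⟨fun h ↦ ⟨fun j hj ↦ h j hj.le, h n le_rfl⟩, fun ⟨h, hn⟩ j hj ↦ ?_⟩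
  rcases hj.lt_or_eq with hj | rfl
  · exact h j hj
  · exact hn

theorem exists_forall_add_le_orderTop_and_coeff_ne_zero {ι : Type*} {w : ι → LaurentSeries R}
    {b : ι → ℤ} (hw : ∀ i, (b i : WithTop ℤ) ≤ (w i).orderTop) (hw₀ : w ≠ 0) :
    ∃ k : ℕ, (∀ i, ((b i + k : ℤ) : WithTop ℤ) ≤ (w i).orderTop) ∧
      ∃ i, (w i).coeff (b i + k) ≠ 0 := by
  by_contra! h
  have hall (k : ℕ) : ∀ i, ((b i + k : ℤ) : WithTop ℤ) ≤ (w i).orderTop := by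
    induction k with
    | zero => simpa using hw
    | succ k ih =>
      intro i
      rw [Nat.cast_succ, ← add_assoc, add_one_le_orderTop_iff]
      exact ⟨ih i, h k ih i⟩
  refine hw₀ (funext fun i ↦ HahnSeries.ext (funext fun n ↦ ?_))
  refine HahnSeries.coeff_eq_zero_of_lt_orderTop (lt_of_lt_of_le ?_ (hall (n + 1 - b i).toNat i))
  exact_mod_cast (show n < b i + (n + 1 - b i).toNat by omega)

end OrderTop

section Polynomial

variable {F : Type} [Field F]

theorem polyK_monomial (m : ℕ) (c : F) :
    polyK F (Polynomial.monomial m c) = HahnSeries.single (-(m : ℤ)) c := by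
  have hC : algebraMap F (Kt F) c = HahnSeries.single 0 c := by
    rw [HahnSeries.algebraMap_apply']
    exact HahnSeries.ofPowerSeries_C c
  change Polynomial.aeval (Kx F) (Polynomial.monomial m c) = _
  rw [Polynomial.aeval_monomial, Kx, HahnSeries.single_pow, hC, HahnSeries.single_mul_single]
  simp

theorem coeff_polyK (p : Polynomial F) (n : ℕ) :
    (polyK F p).coeff (-(n : ℤ)) = p.coeff n := by
  induction p using Polynomial.induction_on' with
  | add p q hp hq => simp [hp, hq]
  | monomial m c => simp [polyK_monomial, HahnSeries.coeff_single, Polynomial.coeff_monomial,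
      eq_comm]

theorem orderTop_polyK_nonpos {p : Polynomial F} (hp : p ≠ 0) : (polyK F p).orderTop ≤ 0 := by
  have hcoeff : (polyK F p).coeff (-(p.natDegree : ℤ)) ≠ 0 := by
    rw [coeff_polyK]
    exact Polynomial.leadingCoeff_ne_zero.2 hp
  refine (HahnSeries.orderTop_le_of_coeff_ne_zero hcoeff).trans ?_
  exact_mod_cast (show -(p.natDegree : ℤ) ≤ 0 by omega)

theorem coeff_polyK_monomial_mul (m : ℕ) (c : F) (f : Kt F) (n : ℤ) :
    (polyK F (Polynomial.monomial m c) * f).coeff n = c * f.coeff (n + m) := by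
  rw [polyK_monomial, HahnSeries.coeff_single_mul, sub_neg_eq_add]

theorem le_orderTop_polyK_monomial_mul {m : ℕ} {f : Kt F} {n : ℤ} (c : F)
    (h : ((n + m : ℤ) : WithTop ℤ) ≤ f.orderTop) :
    (n : WithTop ℤ) ≤ (polyK F (Polynomial.monomial m c) * f).orderTop := by
  rw [HahnSeries.le_orderTop_iff_forall] at h ⊢
  intro j hj
  rw [coeff_polyK_monomial_mul, h, mul_zero]
  have : j < n := by exact_mod_cast hj
  exact_mod_cast (show j + m < n + m by omega)

end Polynomial

section Lattice

variable {F : Type} [Field F] {d : ℕ} {g : Matrix (Fin d) (Fin d) (Kt F)}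
  {v w : Fin d → Kt F}

theorem sub_mem_lattice (hv : v ∈ lattice F g) (hw : w ∈ lattice F g) :
    v - w ∈ lattice F g := by
  obtain ⟨p, rfl⟩ := hv
  obtain ⟨r, rfl⟩ := hw
  refine ⟨p - r, ?_⟩
  rw [← Matrix.mulVec_sub]
  congr 1
  ext1 j
  simp

theorem polyK_smul_mem_lattice (p : Polynomial F) (hv : v ∈ lattice F g) :
    polyK F p • v ∈ lattice F g := by
  obtain ⟨r, rfl⟩ := hv
  refine ⟨p • r, ?_⟩
  rw [← Matrix.mulVec_smul]
  congr 1
  ext1 j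
  simp

theorem col_mem_lattice (g : Matrix (Fin d) (Fin d) (Kt F)) (j : Fin d) :
    g.col j ∈ lattice F g := by
  refine ⟨Pi.single j 1, ?_⟩
  have hsingle : (fun k ↦ polyK F ((Pi.single j 1 : Fin d → Polynomial F) k)) =
      Pi.single j 1 := by
    ext1 k
    rw [Pi.apply_single (fun _ ↦ polyK F) (fun _ ↦ map_zero _), map_one]
  rw [hsingle, Matrix.mulVec_single_one]

theorem exists_det_eq_polyK_mul_det {v : Fin d → Fin d → Kt F} (hv : ∀ j, v j ∈ lattice F g) :
    ∃ p : Polynomial F, (Matrix.of v).det = polyK F p * g.det := by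
  choose C hC using hv
  have hmat : Matrix.of v = (polyK F).mapMatrix (Matrix.of C) * g.transpose := by
    ext1 j i
    rw [Matrix.of_apply, hC j, Matrix.mul_apply]
    simp [Matrix.mulVec, dotProduct, mul_comm]
  exact ⟨(Matrix.of C).det, by
    rw [hmat, Matrix.det_mul, Matrix.det_transpose, RingHom.map_det]⟩

theorem orderTop_det_le_of_mem_lattice {v : Fin d → Fin d → Kt F}
    (hv : ∀ j, v j ∈ lattice F g) (hli : LinearIndependent (Kt F) v) :
    (Matrix.of v).det.orderTop ≤ g.det.orderTop := by
  obtain ⟨p, hp⟩ := exists_det_eq_polyK_mul_det hv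
  have hdet : (Matrix.of v).det ≠ 0 :=
    ((Matrix.isUnit_iff_isUnit_det _).1
      (Matrix.linearIndependent_rows_iff_isUnit.1 hli)).ne_zero
  have hp₀ : p ≠ 0 := by
    rintro rfl
    simp [hp] at hdet
  rw [hp, HahnSeries.orderTop_mul]
  exact add_le_of_nonpos_left (orderTop_polyK_nonpos hp₀)

/-- The vectors `v` of the lattice `g·R^d` with `|v i| ≤ q^{-b i}` for all `i`; in terms of
`t = x⁻¹`, the coordinate `v i` has order at least `b i`. A spanning box with `∑ i, b i` maximal
yields the weights of the trivial flag, up to subtracting their mean. -/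
def latticeBox (g : Matrix (Fin d) (Fin d) (Kt F)) (b : Fin d → ℤ) : Set (Fin d → Kt F) :=
  {v | v ∈ lattice F g ∧ ∀ i, (b i : WithTop ℤ) ≤ (v i).orderTop}

variable {b : Fin d → ℤ}

theorem sub_mem_latticeBox (hv : v ∈ latticeBox g b) (hw : w ∈ latticeBox g b) :
    v - w ∈ latticeBox g b :=
  ⟨sub_mem_lattice hv.1 hw.1, fun i ↦ (HahnSeries.addVal ℤ F).map_le_sub (hv.2 i) (hw.2 i)⟩

theorem mem_latticeBox_update_add_one_iff {i : Fin d} :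
    v ∈ latticeBox g (Function.update b i (b i + 1)) ↔
      v ∈ latticeBox g b ∧ (v i).coeff (b i) = 0 := by
  simp only [latticeBox, Set.mem_ofPred_eq, and_assoc]
  refine and_congr_right fun _ ↦ ?_
  rw [Function.forall_update_iff b fun j (n : ℤ) ↦ (n : WithTop ℤ) ≤ (v j).orderTop,
    add_one_le_orderTop_iff, and_right_comm]
  refine and_congr_left fun _ ↦ ⟨fun ⟨hi, hne⟩ j ↦ ?_, fun h ↦ ⟨h i, fun j _ ↦ h j⟩⟩
  rcases eq_or_ne j i with rfl | hj
  · exact hi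
  · exact hne j hj

theorem span_latticeBox_le_span_update {i : Fin d} {k : ℕ}
    (hw : w ∈ latticeBox g (Function.update b i (b i + 1)))
    (hk : ∀ j, ((b j + k : ℤ) : WithTop ℤ) ≤ (w j).orderTop)
    (hcoeff : (w i).coeff (b i + k) ≠ 0) :
    Submodule.span (Kt F) (latticeBox g b) ≤
      Submodule.span (Kt F) (latticeBox g (Function.update b i (b i + 1))) := by
  rw [Submodule.span_le]
  intro v hv
  set c : F := (v i).coeff (b i) / (w i).coeff (b i + k) with hc
  set u := polyK F (Polynomial.monomial k c) • w with hu
  have hu_mem : u ∈ latticeBox g b :=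
    ⟨polyK_smul_mem_lattice _ hw.1, fun j ↦ le_orderTop_polyK_monomial_mul c (hk j)⟩
  have hsub_mem : v - u ∈ latticeBox g (Function.update b i (b i + 1)) := by
    refine mem_latticeBox_update_add_one_iff.2 ⟨sub_mem_latticeBox hv hu_mem, ?_⟩
    rw [Pi.sub_apply, hu, Pi.smul_apply, smul_eq_mul, HahnSeries.coeff_sub,
      coeff_polyK_monomial_mul, hc, div_mul_cancel₀ _ hcoeff, sub_self]
  rw [← sub_add_cancel v u]
  exact Submodule.add_mem _ (Submodule.subset_span hsub_mem)
    (Submodule.smul_mem _ _ (Submodule.subset_span hw))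

theorem exists_span_latticeBox_le_span_update (hw : w ∈ lattice F g) (hw₀ : w ≠ 0)
    (hlt : ∀ i, (b i : WithTop ℤ) < (w i).orderTop) :
    ∃ i, Submodule.span (Kt F) (latticeBox g b) ≤
      Submodule.span (Kt F) (latticeBox g (Function.update b i (b i + 1))) := by
  have hsucc (i : Fin d) : ((b i + 1 : ℤ) : WithTop ℤ) ≤ (w i).orderTop :=
    add_one_le_orderTop_iff.2 ⟨(hlt i).le, HahnSeries.coeff_eq_zero_of_lt_orderTop (hlt i)⟩
  obtain ⟨k, hk, i, hi⟩ := exists_forall_add_le_orderTop_and_coeff_ne_zero hsucc hw₀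
  have hshift (j : Fin d) : b j + 1 + (k : ℤ) = b j + (k + 1 : ℕ) := by push_cast; ring
  simp only [hshift] at hk hi
  have hmem : w ∈ latticeBox g (Function.update b i (b i + 1)) :=
    mem_latticeBox_update_add_one_iff.2
      ⟨⟨hw, fun j ↦ (hlt j).le⟩, HahnSeries.coeff_eq_zero_of_lt_orderTop (hlt i)⟩
  exact ⟨i, span_latticeBox_le_span_update hmem hk hi⟩

theorem sum_le_orderTop_det_of_span_latticeBox_eq_top
    (hspan : Submodule.span (Kt F) (latticeBox g b) = ⊤) :
    ((∑ i, b i : ℤ) : WithTop ℤ) ≤ g.det.orderTop := by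
  obtain ⟨v, hv, hli⟩ :=
    exists_fun_fin_linearIndependent_of_span_eq_top (Module.finrank_fin_fun _) hspan
  rw [WithTop.coe_sum]
  exact (sum_le_addValuation_det (HahnSeries.addVal ℤ F) fun j ↦ (hv j).2).trans
    (orderTop_det_le_of_mem_lattice (fun j ↦ (hv j).1) hli)

theorem exists_span_latticeBox_eq_top (hg : g.det ≠ 0) :
    ∃ b : Fin d → ℤ, Submodule.span (Kt F) (latticeBox g b) = ⊤ := by
  have hli : LinearIndependent (Kt F) g.col :=
    Matrix.linearIndependent_cols_iff_isUnit.2 ((Matrix.isUnit_iff_isUnit_det _).2 hg.isUnit)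
  have hcols := hli.span_eq_top_of_card_eq_finrank' (by simp)
  choose b hb using fun i ↦ (Set.finite_range fun j ↦ (g i j).order).bddBelow
  refine ⟨b, eq_top_mono (Submodule.span_mono ?_) hcols⟩
  rintro _ ⟨j, rfl⟩
  refine ⟨col_mem_lattice g j, fun i ↦ HahnSeries.le_orderTop_iff_forall.2 fun n hn ↦ ?_⟩
  exact HahnSeries.coeff_eq_zero_of_lt_order
    ((WithTop.coe_lt_coe.1 hn).trans_le (hb i (Set.mem_range_self j)))

theorem exists_span_latticeBox_eq_top_and_orderTop_le (hg : g.det ≠ 0) :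
    ∃ b : Fin d → ℤ, Submodule.span (Kt F) (latticeBox g b) = ⊤ ∧
      ∀ w ∈ lattice F g, w ≠ 0 → ∃ i, (w i).orderTop ≤ b i := by
  have hbdd : ∀ z : ℤ, (∃ b : Fin d → ℤ, Submodule.span (Kt F) (latticeBox g b) = ⊤ ∧
      ∑ i, b i = z) → z ≤ g.det.order := by
    rintro _ ⟨b, hb, rfl⟩
    have := sum_le_orderTop_det_of_span_latticeBox_eq_top hb
    rwa [← HahnSeries.order_eq_orderTop_of_ne_zero hg, WithTop.coe_le_coe] at this
  obtain ⟨b₀, hb₀⟩ := exists_span_latticeBox_eq_top hg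
  obtain ⟨_, ⟨b, hspan, rfl⟩, hmax⟩ := Int.exists_greatest_of_bdd ⟨_, hbdd⟩ ⟨_, b₀, hb₀, rfl⟩
  refine ⟨b, hspan, fun w hw hw₀ ↦ ?_⟩
  by_contra! hlt
  obtain ⟨i, hi⟩ := exists_span_latticeBox_le_span_update hw hw₀ hlt
  have hle := hmax _ ⟨_, eq_top_mono hi hspan, rfl⟩
  rw [Finset.sum_update_of_mem (Finset.mem_univ i), Finset.sum_sdiff_eq_sub (by simp),
    Finset.sum_singleton] at hle
  omega

end Lattice

section Minima

variable {F : Type} [Field F]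

theorem minimaN_eq_of_linearIndependent {d n i : ℕ} {nrm : (Fin d → Kt F) → ℝ}
    {Λ : Set (Fin d → Kt F)} {r : ℝ} {v : Fin n → Fin d → Kt F} (hr : 0 < r)
    (hv : ∀ j, v j ∈ Λ) (hli : LinearIndependent (Kt F) v) (hle : ∀ j, nrm (v j) ≤ r)
    (hge : ∀ w ∈ Λ, w ≠ 0 → r ≤ nrm w) (hi : 0 < i) (hin : i ≤ n) :
    minimaN F nrm Λ i = r := by
  refine IsLeast.csInf_eq ⟨⟨hr, v ∘ Fin.castLE hin, fun j ↦ hv _,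
    hli.comp _ (Fin.castLE_injective hin), fun j ↦ hle _⟩, ?_⟩
  rintro r' ⟨-, u, hu, hu_li, hu_le⟩
  exact (hge _ (hu ⟨0, hi⟩) (hu_li.ne_zero _)).trans (hu_le ⟨0, hi⟩)

end Minima

section Norm

theorem one_lt_cast_card (α : Type*) [Fintype α] [Nontrivial α] : (1 : ℝ) < Fintype.card α :=
  Nat.one_lt_cast.2 Fintype.one_lt_card

variable {Fq : Type} [Field Fq] [Fintype Fq]

theorem rpow_mul_Kabs (a : ℝ) {f : Kt Fq} (hf : f ≠ 0) :
    (Fintype.card Fq : ℝ) ^ a * Kabs Fq f = (Fintype.card Fq : ℝ) ^ (a - f.order) := by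
  rw [Kabs, if_neg hf, ← Real.rpow_intCast,
    ← Real.rpow_add (zero_lt_one.trans (one_lt_cast_card Fq)), Int.cast_neg, sub_eq_add_neg]

theorem rpow_mul_Kabs_le_iff {n : ℤ} {s : ℝ} {f : Kt Fq} :
    (Fintype.card Fq : ℝ) ^ (n - s) * Kabs Fq f ≤ (Fintype.card Fq : ℝ) ^ (-s) ↔
      (n : WithTop ℤ) ≤ f.orderTop := by
  have hq := one_lt_cast_card Fq
  rcases eq_or_ne f 0 with rfl | hf
  · simpa [Kabs] using Real.rpow_nonneg (zero_le_one.trans hq.le) (-s)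
  · rw [rpow_mul_Kabs _ hf, Real.rpow_le_rpow_left_iff hq,
      ← HahnSeries.order_eq_orderTop_of_ne_zero hf, WithTop.coe_le_coe, ← Int.cast_le (R := ℝ)]
    constructor <;> intro h <;> linarith

theorem le_rpow_mul_Kabs_iff {n : ℤ} {s : ℝ} {f : Kt Fq} :
    (Fintype.card Fq : ℝ) ^ (-s) ≤ (Fintype.card Fq : ℝ) ^ (n - s) * Kabs Fq f ↔
      f.orderTop ≤ n := by
  have hq := one_lt_cast_card Fq
  rcases eq_or_ne f 0 with rfl | hf
  · simpa [Kabs] using Real.rpow_pos_of_pos (zero_lt_one.trans hq) (-s)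
  · rw [rpow_mul_Kabs _ hf, Real.rpow_le_rpow_left_iff hq,
      ← HahnSeries.order_eq_orderTop_of_ne_zero hf, WithTop.coe_le_coe, ← Int.cast_le (R := ℝ)]
    constructor <;> intro h <;> linarith

variable {d : ℕ} {b : Fin d → ℤ} {s : ℝ} {v : Fin d → Kt Fq}

theorem anorm_le_of_forall_le_orderTop (h : ∀ i, (b i : WithTop ℤ) ≤ (v i).orderTop) :
    anorm Fq (fun i ↦ b i - s) v ≤ (Fintype.card Fq : ℝ) ^ (-s) :=
  Real.iSup_le (fun i ↦ rpow_mul_Kabs_le_iff.2 (h i)) (by positivity)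

theorem le_anorm_of_orderTop_le {i : Fin d} (h : (v i).orderTop ≤ b i) :
    (Fintype.card Fq : ℝ) ^ (-s) ≤ anorm Fq (fun i ↦ b i - s) v :=
  le_ciSup_of_le (Set.finite_range _).bddAbove i (le_rpow_mul_Kabs_iff.2 h)

end Norm

theorem exists_real_trivial_flag_general {d : ℕ} (g : Matrix (Fin d) (Fin d) (Kt Fq))
    (hg : g.det ≠ 0) :
    ∃ a : Fin d → ℝ, ∑ i, a i = 0 ∧
      ∀ i : Fin d, minimaN Fq (anorm Fq a) (lattice Fq g) ((i : ℕ) + 1)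
        = minimaN Fq (anorm Fq a) (lattice Fq g) 1 := by
  obtain ⟨b, hspan, hb⟩ := exists_span_latticeBox_eq_top_and_orderTop_le hg
  obtain ⟨v, hv, hli⟩ :=
    exists_fun_fin_linearIndependent_of_span_eq_top (Module.finrank_fin_fun _) hspan
  set s : ℝ := (∑ i, (b i : ℝ)) / d with hs
  have hminima (i : ℕ) (hi : 0 < i) (hid : i ≤ d) :
      minimaN Fq (anorm Fq fun i ↦ b i - s) (lattice Fq g) i = (Fintype.card Fq : ℝ) ^ (-s) :=
    minimaN_eq_of_linearIndependent
      (Real.rpow_pos_of_pos (zero_lt_one.trans (one_lt_cast_card Fq)) _) (fun j ↦ (hv j).1) hli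
      (fun j ↦ anorm_le_of_forall_le_orderTop (hv j).2)
      (fun w hw hw₀ ↦ (hb w hw hw₀).elim fun _ ↦ le_anorm_of_orderTop_le) hi hid
  refine ⟨fun i ↦ b i - s, ?_, fun i ↦ ?_⟩
  · rcases eq_or_ne d 0 with rfl | hd
    · simp
    · simp [hs, mul_div_cancel₀, hd]
  · rw [hminima _ i.1.succ_pos i.2, hminima _ one_pos i.pos]

/-- For every unimodular lattice `Λ ⊆ K̃^d` there exists `a ∈ ℝ^d` with
`Σ a_i = 0` such that all the successive minima of `Λ` with respect to `‖·‖_a` coincide,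
i.e. the Minkowski flag of `Λ` with respect to `‖·‖_a` is trivial. -/
theorem exists_real_trivial_flag {d : ℕ} (hd : 2 ≤ d)
    (g : Matrix (Fin d) (Fin d) (Kt Fq)) (hg : Kabs Fq g.det = 1) :
    ∃ a : Fin d → ℝ, ∑ i, a i = 0 ∧
      ∀ i : Fin d, minimaN Fq (anorm Fq a) (lattice Fq g) ((i : ℕ) + 1)
        = minimaN Fq (anorm Fq a) (lattice Fq g) 1 :=
  exists_real_trivial_flag_general Fq g fun h ↦ by simp [Kabs, h] at hg
end
end

section
/- Let d ≥ 2. For every unimodular lattice Λ ⊆ K̃^d, the Mordell constant satisfies κ(Λ) = q^{-d}; that is, there exists an admissible box for Λ of volume q^{-d}, and every box of volume strictly greater than q^{-d} contains a nonzero point of Λ. In particular the Gruber–Mordell spectrum MG_d = {κ(Λ) : Λ unimodular lattice in K̃^d} equals {q^{-d}}. -/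
noncomputable section

open scoped Classical

variable (Fq : Type) [Field Fq] [Fintype Fq]

/-!
If the entries of `M` have order at least `aᵢ + bⱼ`, then the coefficient of `det M` at
`∑ aᵢ + ∑ bⱼ` is the determinant of the matrix of leading coefficients; when that is nonzero,
`ord (det M) = ∑ aᵢ + ∑ bⱼ`.

Every large box meets the lattice: among the bases of `Λ = g R^d`, take one whose columns have
maximal total order relative to the box of orders `s`. A linear relation between its leading
coefficients would allow increasing one of these orders, so the leading matrix is nonsingular and
the column orders `bⱼ` satisfy `∑ sᵢ + ∑ bⱼ = ord (det g)`. If `∑ sᵢ < ord (det g) + d`, some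
`bⱼ` is nonnegative, and the corresponding column lies in the box.

Sharpness: take an admissible box of largest volume. Enlarging its `j`-th side by a factor `q`
creates a lattice vector `vⱼ` in the new box but not in the old one. The leading matrix of
`(v₁, …, v_d)` relative to the weights `sᵢ - 1` is diagonal with nonzero diagonal, so
`∑ sᵢ - d = ord (det v) ≤ ord (det g)`.
-/

theorem det_updateCol_mulVec {ι R : Type*} [Fintype ι] [DecidableEq ι] [CommRing R]
    (A : Matrix ι ι R) (j : ι) (u : ι → R) : (A.updateCol j (A.mulVec u)).det = u j * A.det := by
  rw [← smul_eq_mul, ← Matrix.det_updateCol_sum]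
  congr! 2
  ext1 i
  simp [Matrix.mulVec, dotProduct, mul_comm]

theorem sum_add_sum_eq_sum_perm {ι M : Type*} [Fintype ι] [AddCommMonoid M] (a b : ι → M)
    (σ : Equiv.Perm ι) : ∑ i, a i + ∑ j, b j = ∑ j, (a (σ j) + b j) := by
  rw [Finset.sum_add_distrib, Equiv.sum_comp σ a]

section LeadingCoefficients

open HahnSeries

variable {Γ R ι : Type*} [LinearOrder Γ]

theorem le_orderTop_sum [AddCommMonoid R] {f : ι → R⟦Γ⟧} {n : WithTop Γ} {s : Finset ι}
    (h : ∀ i ∈ s, n ≤ (f i).orderTop) : n ≤ (∑ i ∈ s, f i).orderTop := by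
  rw [le_orderTop_iff_forall]
  intro m hm
  rw [coeff_sum]
  exact Finset.sum_eq_zero fun i hi ↦ coeff_eq_zero_of_lt_orderTop (hm.trans_le (h i hi))

theorem add_one_le_orderTop [Zero R] {x : R⟦ℤ⟧} {n : ℤ} (h : n ≤ x.orderTop)
    (hn : x.coeff n = 0) : (n + 1 : ℤ) ≤ x.orderTop := by
  refine le_orderTop_iff_forall.2 fun m hm ↦ ?_
  obtain hlt | rfl := (Int.lt_add_one_iff.1 (WithTop.coe_lt_coe.1 hm)).lt_or_eq
  · exact coeff_eq_zero_of_lt_orderTop ((WithTop.coe_lt_coe.2 hlt).trans_le h)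
  · exact hn

variable [AddCommMonoid Γ] [IsOrderedCancelAddMonoid Γ]

theorem coeff_add_mul_of_le_orderTop [NonUnitalNonAssocSemiring R] {x y : R⟦Γ⟧} {m n : Γ}
    (hx : m ≤ x.orderTop) (hy : n ≤ y.orderTop) :
    (x * y).coeff (m + n) = x.coeff m * y.coeff n := by
  rw [coeff_mul]
  refine Finset.sum_eq_single (m, n) ?_ ?_
  · rintro ⟨i, j⟩ hij hne
    obtain ⟨hi, hj, hsum⟩ := Finset.mem_antidiagonal.1 hij
    have hmi : m ≤ i := WithTop.coe_le_coe.1 (hx.trans (orderTop_le_of_coeff_ne_zero hi))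
    have hnj : n ≤ j := WithTop.coe_le_coe.1 (hy.trans (orderTop_le_of_coeff_ne_zero hj))
    obtain ⟨rfl, rfl⟩ := (add_eq_add_iff_eq_and_eq hmi hnj).1 hsum.symm
    exact absurd rfl hne
  · intro hmn
    by_contra hne
    exact hmn (Finset.mem_antidiagonal.2 ⟨left_ne_zero_of_mul hne, right_ne_zero_of_mul hne, rfl⟩)

theorem add_le_orderTop_mulVec [NonUnitalNonAssocSemiring R] [Fintype ι] {A : Matrix ι ι R⟦Γ⟧}
    {v : ι → R⟦Γ⟧} {i : ι} {m n : Γ} (hA : ∀ j, m ≤ (A i j).orderTop)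
    (hv : ∀ j, n ≤ (v j).orderTop) : (m + n : Γ) ≤ (A.mulVec v i).orderTop := by
  rw [Matrix.mulVec, dotProduct, WithTop.coe_add]
  exact le_orderTop_sum fun j _ ↦ (add_le_add (hA j) (hv j)).trans orderTop_add_le_mul

section Product

variable [CommSemiring R] {f : ι → R⟦Γ⟧} {n : ι → Γ} {s : Finset ι}

theorem sum_le_orderTop_prod (h : ∀ i ∈ s, n i ≤ (f i).orderTop) :
    (∑ i ∈ s, n i : Γ) ≤ (∏ i ∈ s, f i).orderTop := by
  classical
  induction s using Finset.induction_on with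
  | empty => simpa using orderTop_single_le (Γ := Γ) (a := 0) (r := (1 : R))
  | insert i s hi ih =>
    rw [Finset.forall_mem_insert] at h
    rw [Finset.prod_insert hi, Finset.sum_insert hi, WithTop.coe_add]
    exact (add_le_add h.1 (ih h.2)).trans orderTop_add_le_mul

theorem coeff_sum_prod_of_le_orderTop (h : ∀ i ∈ s, n i ≤ (f i).orderTop) :
    (∏ i ∈ s, f i).coeff (∑ i ∈ s, n i) = ∏ i ∈ s, (f i).coeff (n i) := by
  classical
  induction s using Finset.induction_on with
  | empty => simp
  | insert i s hi ih =>
    rw [Finset.forall_mem_insert] at h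
    rw [Finset.prod_insert hi, Finset.sum_insert hi, Finset.prod_insert hi,
      coeff_add_mul_of_le_orderTop h.1 (sum_le_orderTop_prod h.2), ih h.2]

end Product

variable [CommRing R]

/-- The matrix of leading coefficients of a matrix `M` of Hahn series relative to row weights `a`
and column weights `b`. It is meaningful when `M i j` has order at least `a i + b j`; entries of
larger order then contribute `0`. -/
def leadingMatrix (a b : ι → Γ) (M : Matrix ι ι R⟦Γ⟧) : Matrix ι ι R :=
  Matrix.of fun i j ↦ (M i j).coeff (a i + b j)

variable [Fintype ι] [DecidableEq ι] {a b : ι → Γ} {M : Matrix ι ι R⟦Γ⟧}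

theorem sum_add_sum_le_orderTop_det (h : ∀ i j, (a i + b j : Γ) ≤ (M i j).orderTop) :
    (∑ i, a i + ∑ j, b j : Γ) ≤ M.det.orderTop := by
  rw [Matrix.det_apply]
  refine le_orderTop_sum fun σ _ ↦ ?_
  have hprod : (∑ i, a i + ∑ j, b j : Γ) ≤ (∏ j, M (σ j) j).orderTop := by
    rw [sum_add_sum_eq_sum_perm a b σ]
    exact sum_le_orderTop_prod fun j _ ↦ h (σ j) j
  obtain hσ | hσ := Int.units_eq_one_or σ.sign
  · rwa [hσ, one_smul]
  · rwa [hσ, Units.neg_smul, one_smul, orderTop_neg]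

theorem coeff_det_eq_det_leadingMatrix (h : ∀ i j, (a i + b j : Γ) ≤ (M i j).orderTop) :
    M.det.coeff (∑ i, a i + ∑ j, b j) = (leadingMatrix a b M).det := by
  rw [Matrix.det_apply, Matrix.det_apply, coeff_sum]
  refine Finset.sum_congr rfl fun σ _ ↦ ?_
  have hprod : (∏ j, M (σ j) j).coeff (∑ i, a i + ∑ j, b j) =
      ∏ j, leadingMatrix a b M (σ j) j := by
    rw [sum_add_sum_eq_sum_perm a b σ]
    exact coeff_sum_prod_of_le_orderTop fun j _ ↦ h (σ j) j
  obtain hσ | hσ := Int.units_eq_one_or σ.sign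
  · rw [hσ, one_smul, one_smul, hprod]
  · rw [hσ, Units.neg_smul, one_smul, Units.neg_smul, one_smul, coeff_neg, hprod]

theorem det_ne_zero_of_det_leadingMatrix_ne_zero
    (h : ∀ i j, (a i + b j : Γ) ≤ (M i j).orderTop) (hL : (leadingMatrix a b M).det ≠ 0) :
    M.det ≠ 0 :=
  ne_zero_of_coeff_ne_zero ((coeff_det_eq_det_leadingMatrix h).trans_ne hL)

theorem order_det_eq_of_det_leadingMatrix_ne_zero
    (h : ∀ i j, (a i + b j : Γ) ≤ (M i j).orderTop) (hL : (leadingMatrix a b M).det ≠ 0) :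
    M.det.order = ∑ i, a i + ∑ j, b j := by
  refine (order_le_of_coeff_ne_zero ((coeff_det_eq_det_leadingMatrix h).trans_ne hL)).antisymm ?_
  rw [← WithTop.coe_le_coe,
    order_eq_orderTop_of_ne_zero (det_ne_zero_of_det_leadingMatrix_ne_zero h hL)]
  exact sum_add_sum_le_orderTop_det h

end LeadingCoefficients

section Lattices

open HahnSeries
open scoped Polynomial

variable {F : Type} [Field F]

theorem polyK_C (a : F) : polyK F (Polynomial.C a) = HahnSeries.C a := by
  simp [polyK, HahnSeries.algebraMap_apply']

theorem polyK_monomial_s16 (n : ℕ) (a : F) :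
    polyK F (Polynomial.monomial n a) = single (-(n : ℤ)) a := by
  simp [polyK, Kx, Polynomial.aeval_monomial, HahnSeries.algebraMap_apply', single_pow]

theorem coeff_polyK_neg (p : F[X]) (n : ℕ) : (polyK F p).coeff (-(n : ℤ)) = p.coeff n := by
  induction p using Polynomial.induction_on' with
  | add p q hp hq => rw [map_add, coeff_add, hp, hq, Polynomial.coeff_add]
  | monomial m a =>
    simp [polyK_monomial_s16, coeff_single, Polynomial.coeff_monomial, eq_comm]

theorem eq_zero_of_zero_lt_orderTop_polyK {p : F[X]} (h : 0 < (polyK F p).orderTop) : p = 0 := by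
  ext n
  rw [← coeff_polyK_neg, Polynomial.coeff_zero]
  refine coeff_eq_zero_of_lt_orderTop (lt_of_le_of_lt ?_ h)
  exact_mod_cast neg_nonpos.2 (Int.natCast_nonneg n)

theorem order_polyK_nonpos (p : F[X]) : (polyK F p).order ≤ 0 := by
  by_contra! h
  have hp : p = 0 := eq_zero_of_zero_lt_orderTop_polyK (zero_lt_orderTop_of_order h)
  simp [hp] at h

variable {d : ℕ} {g A : Matrix (Fin d) (Fin d) (Kt F)} {s : Fin d → ℤ}

theorem zero_mem_lattice (g : Matrix (Fin d) (Fin d) (Kt F)) : 0 ∈ lattice F g :=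
  ⟨0, by ext i; simp [Matrix.mulVec, dotProduct]⟩

theorem exists_eq_mul_map_polyK (hA : ∀ j, A.col j ∈ lattice F g) :
    ∃ P : Matrix (Fin d) (Fin d) F[X], A = g * P.map (polyK F) := by
  choose c hc using hA
  refine ⟨Matrix.of fun i j ↦ c j i, Matrix.ext fun i j ↦ ?_⟩
  exact congrFun (hc j) i

theorem mulVec_polyK_mem_lattice (hA : ∀ j, A.col j ∈ lattice F g) (p : Fin d → F[X]) :
    (A.mulVec fun j ↦ polyK F (p j)) ∈ lattice F g := by
  obtain ⟨P, rfl⟩ := exists_eq_mul_map_polyK hA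
  refine ⟨P.mulVec p, ?_⟩
  rw [← Matrix.mulVec_mulVec]
  congr 1
  ext1 i
  simp [Matrix.mulVec, dotProduct, map_sum]

theorem order_det_le_of_col_mem_lattice (hA : ∀ j, A.col j ∈ lattice F g) (hdet : A.det ≠ 0) :
    A.det.order ≤ g.det.order := by
  obtain ⟨P, rfl⟩ := exists_eq_mul_map_polyK hA
  have hP : (P.map (polyK F)).det = polyK F P.det := ((polyK F).map_det P).symm
  rw [Matrix.det_mul, hP] at hdet ⊢
  rw [order_mul (left_ne_zero_of_mul hdet) (right_ne_zero_of_mul hdet)]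
  linarith [order_polyK_nonpos P.det]

/-- The box `{v : |vᵢ| ≤ q ^ (-sᵢ)}`, of volume `q ^ (-∑ sᵢ)`: enlarging the box means decreasing
the orders `sᵢ`. -/
def box (s : Fin d → ℤ) : Set (Fin d → Kt F) := {v | ∀ i, s i ≤ (v i).orderTop}

theorem exists_forall_add_le_orderTop (s : Fin d → ℤ) (A : Matrix (Fin d) (Fin d) (Kt F)) :
    ∃ u : ℤ, ∀ i j, (s i + u : ℤ) ≤ (A i j).orderTop := by
  obtain ⟨u, hu⟩ := Finite.exists_ge fun ij : Fin d × Fin d ↦ (A ij.1 ij.2).order - s ij.1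
  refine ⟨u, fun i j ↦ ?_⟩
  obtain h0 | h0 := eq_or_ne (A i j) 0
  · simp [h0]
  · rw [← order_eq_orderTop_of_ne_zero h0, WithTop.coe_le_coe]
    linarith [hu (i, j)]

/-- The columns of `A` form a basis of the lattice of `g`. This is encoded as: they lie in the
lattice and span a sublattice of the same covolume. -/
structure IsLatticeBasis (g A : Matrix (Fin d) (Fin d) (Kt F)) : Prop where
  col_mem : ∀ j, A.col j ∈ lattice F g
  det_ne_zero : A.det ≠ 0
  order_det : A.det.order = g.det.order

namespace IsLatticeBasis

theorem self (hg : g.det ≠ 0) : IsLatticeBasis g g := by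
  refine ⟨fun j ↦ ⟨Pi.single j 1, ?_⟩, hg, rfl⟩
  rw [← Matrix.mulVec_single_one]
  congr 1
  ext1 k
  rw [Pi.apply_single (fun _ ↦ polyK F) (fun _ ↦ map_zero _), map_one]

theorem updateCol_mulVec (hA : IsLatticeBasis g A) {j : Fin d} {p : Fin d → F[X]} {a : F}
    (ha : a ≠ 0) (hp : p j = Polynomial.C a) :
    IsLatticeBasis g (A.updateCol j (A.mulVec fun k ↦ polyK F (p k))) := by
  have hdet : (A.updateCol j (A.mulVec fun k ↦ polyK F (p k))).det = HahnSeries.C a * A.det := by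
    rw [det_updateCol_mulVec, hp, polyK_C]
  have hC : (HahnSeries.C a : Kt F) ≠ 0 := HahnSeries.C_ne_zero ha
  refine ⟨fun k ↦ ?_, ?_, ?_⟩
  · obtain rfl | hk := eq_or_ne k j
    · convert mulVec_polyK_mem_lattice hA.col_mem p using 1
      ext1 i
      simp
    · convert hA.col_mem k using 1
      ext1 i
      simp [hk]
  · rw [hdet]
    exact mul_ne_zero hC hA.det_ne_zero
  · rw [hdet, order_mul hC hA.det_ne_zero, order_C, zero_add, hA.order_det]

end IsLatticeBasis

-- Let `w` be a kernel vector of the leading matrix, and `j` an index with `w j ≠ 0` and `b j`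
-- minimal. Scaling each column `k` by `w k * x ^ (b k - b j)` makes the leading terms cancel.
theorem exists_mulVec_polyK_mem_box {b : Fin d → ℤ}
    (hb : ∀ i j, (s i + b j : ℤ) ≤ (A i j).orderTop) (hL : (leadingMatrix s b A).det = 0) :
    ∃ (j : Fin d) (p : Fin d → F[X]) (a : F), a ≠ 0 ∧ p j = Polynomial.C a ∧
      (A.mulVec fun k ↦ polyK F (p k)) ∈ box fun i ↦ s i + (b j + 1) := by
  obtain ⟨w, hw, hLw⟩ := Matrix.exists_mulVec_eq_zero_iff.2 hL
  obtain ⟨j, hj, hmin⟩ : ∃ j, w j ≠ 0 ∧ ∀ k, w k ≠ 0 → b j ≤ b k := by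
    obtain ⟨k, hk⟩ := Function.ne_iff.1 hw
    simpa using Finset.exists_min_image {k | w k ≠ 0} b ⟨k, by simpa using hk⟩
  let p : Fin d → F[X] := fun k ↦ Polynomial.monomial (b k - b j).toNat (w k)
  have hcoeff (i k : Fin d) (m : ℤ) :
      (A i k * polyK F (p k)).coeff m = (A i k).coeff (m + (b k - b j)) * w k := by
    obtain hwk | hwk := eq_or_ne (w k) 0
    · simp [p, hwk]
    · rw [polyK_monomial_s16, Int.toNat_of_nonneg (sub_nonneg.2 (hmin k hwk)), ← coeff_mul_single_add,
        add_neg_cancel_right]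
  refine ⟨j, p, w j, hj, by simp [p], fun i ↦ le_orderTop_iff_forall.2 fun m hm ↦ ?_⟩
  have hm' : m ≤ s i + b j := by
    have hlt := WithTop.coe_lt_coe.1 hm
    lia
  simp only [Matrix.mulVec, dotProduct, coeff_sum, hcoeff]
  obtain hlt | rfl := hm'.lt_or_eq
  · refine Finset.sum_eq_zero fun k _ ↦ ?_
    rw [coeff_eq_zero_of_lt_orderTop, zero_mul]
    refine lt_of_lt_of_le (WithTop.coe_lt_coe.2 ?_) (hb i k)
    lia
  · have hi := congrFun hLw i
    simp only [add_add_sub_cancel]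
    simpa [Matrix.mulVec, dotProduct, leadingMatrix] using hi

theorem exists_reduced_basis (hg : g.det ≠ 0) (s : Fin d → ℤ) :
    ∃ (A : Matrix (Fin d) (Fin d) (Kt F)) (b : Fin d → ℤ), IsLatticeBasis g A ∧
      (∀ i j, (s i + b j : ℤ) ≤ (A i j).orderTop) ∧ (leadingMatrix s b A).det ≠ 0 := by
  let IsWeightSum (n : ℤ) : Prop := ∃ (A : Matrix (Fin d) (Fin d) (Kt F)) (b : Fin d → ℤ),
    IsLatticeBasis g A ∧ (∀ i j, (s i + b j : ℤ) ≤ (A i j).orderTop) ∧ ∑ j, b j = n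
  have hbdd : ∀ n, IsWeightSum n → n ≤ g.det.order - ∑ i, s i := by
    rintro _ ⟨A, b, hA, hb, rfl⟩
    have hle := sum_add_sum_le_orderTop_det hb
    rw [← order_eq_orderTop_of_ne_zero hA.det_ne_zero, WithTop.coe_le_coe, hA.order_det] at hle
    linarith
  have hne : ∃ n, IsWeightSum n := by
    obtain ⟨u, hu⟩ := exists_forall_add_le_orderTop s g
    exact ⟨_, g, fun _ ↦ u, .self hg, hu, rfl⟩
  obtain ⟨_, ⟨A, b, hA, hb, rfl⟩, hmax⟩ := Int.exists_greatest_of_bdd ⟨_, hbdd⟩ hne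
  refine ⟨A, b, hA, hb, fun hL ↦ ?_⟩
  obtain ⟨j, p, a, ha, hp, hbox⟩ := exists_mulVec_polyK_mem_box hb hL
  have hlarger : IsWeightSum (∑ k, b k + 1) := by
    refine ⟨_, b + Pi.single j 1, hA.updateCol_mulVec ha hp, fun i k ↦ ?_, ?_⟩
    · obtain rfl | hk := eq_or_ne k j
      · simpa using hbox i
      · simpa [hk] using hb i k
    · simp [Finset.sum_add_distrib]
  linarith [hmax _ hlarger]

theorem exists_ne_zero_mem_lattice_mem_box (hg : g.det ≠ 0) (hs : ∑ i, s i < g.det.order + d) :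
    ∃ v ∈ lattice F g, v ≠ 0 ∧ v ∈ box s := by
  obtain ⟨A, b, hA, hb, hL⟩ := exists_reduced_basis hg s
  have hsum : g.det.order = ∑ i, s i + ∑ j, b j :=
    hA.order_det.symm.trans (order_det_eq_of_det_leadingMatrix_ne_zero hb hL)
  obtain ⟨j, -, hj⟩ : ∃ j ∈ Finset.univ, -1 < b j := by
    refine Finset.exists_lt_of_sum_lt ?_
    rw [Fin.sum_const, nsmul_eq_mul]
    linarith
  refine ⟨A.col j, hA.col_mem j, fun h0 ↦ ?_, fun i ↦ (WithTop.coe_le_coe.2 ?_).trans (hb i j)⟩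
  · exact hA.det_ne_zero (Matrix.det_eq_zero_of_column_eq_zero j (congrFun h0))
  · lia

/-- Admissibility of the box `box s` for `Λ`: their only common point is the origin. -/
def IsAdmissible (s : Fin d → ℤ) (Λ : Set (Fin d → Kt F)) : Prop := box s ∩ Λ = {0}

theorem isAdmissible_lattice_iff :
    IsAdmissible s (lattice F g) ↔ ∀ v ∈ lattice F g, v ∈ box s → v = 0 := by
  have h0 : (0 : Fin d → Kt F) ∈ box s ∩ lattice F g := ⟨fun i ↦ by simp, zero_mem_lattice g⟩
  rw [IsAdmissible, Set.eq_singleton_iff_unique_mem, and_iff_right h0]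
  exact ⟨fun h v hv hbox ↦ h v ⟨hbox, hv⟩, fun h v hv ↦ h v hv.2 hv.1⟩

theorem IsAdmissible.order_det_add_le_sum (hs : IsAdmissible s (lattice F g)) (hg : g.det ≠ 0) :
    g.det.order + d ≤ ∑ i, s i := by
  by_contra! hlt
  obtain ⟨v, hv, hv0, hbox⟩ := exists_ne_zero_mem_lattice_mem_box hg hlt
  exact hv0 (isAdmissible_lattice_iff.1 hs v hv hbox)

theorem exists_isAdmissible_lattice (hg : g.det ≠ 0) : ∃ s, IsAdmissible s (lattice F g) := by
  obtain ⟨u, hu⟩ := exists_forall_add_le_orderTop 0 g⁻¹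
  refine ⟨fun _ ↦ 1 - u, isAdmissible_lattice_iff.2 ?_⟩
  rintro _ ⟨c, rfl⟩ hc
  have hcancel : (g⁻¹.mulVec (g.mulVec fun j ↦ polyK F (c j))) = fun j ↦ polyK F (c j) := by
    rw [Matrix.mulVec_mulVec, Matrix.nonsing_inv_mul _ hg.isUnit, Matrix.one_mulVec]
  have hc0 : c = 0 := by
    funext i
    apply eq_zero_of_zero_lt_orderTop_polyK
    rw [← congrFun hcancel i]
    refine lt_of_lt_of_le ?_ (add_le_orderTop_mulVec (m := u) (fun j ↦ ?_) hc)
    · simp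
    · simpa using hu i j
  ext1 i
  simp [hc0, Matrix.mulVec, dotProduct]

theorem sum_le_order_det_add_of_mem_box {v : Fin d → Fin d → Kt F} (hv : ∀ j, v j ∈ lattice F g)
    (hbox : ∀ j, v j ∈ box (s - Pi.single j 1)) (hnot : ∀ j, v j ∉ box s) :
    ∑ i, s i ≤ g.det.order + d := by
  let A : Matrix (Fin d) (Fin d) (Kt F) := Matrix.of fun i j ↦ v j i
  have hbound (i j : Fin d) : (s i - 1 + 0 : ℤ) ≤ (A i j).orderTop := by
    refine (WithTop.coe_le_coe.2 ?_).trans (hbox j i)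
    obtain rfl | hij := eq_or_ne i j <;> simp [*]
  have hdiag (j : Fin d) : leadingMatrix (s · - 1) 0 A j j ≠ 0 := fun hj ↦ hnot j fun i ↦ by
    obtain rfl | hij := eq_or_ne i j
    · simpa [A] using add_one_le_orderTop (hbound i i) hj
    · simpa [hij] using hbox j i
  have hL : leadingMatrix (s · - 1) 0 A = Matrix.diagonal (leadingMatrix (s · - 1) 0 A).diag := by
    refine (Matrix.IsDiag.diagonal_diag fun i j hij ↦ ?_).symm
    refine coeff_eq_zero_of_lt_orderTop (lt_of_lt_of_le (WithTop.coe_lt_coe.2 ?_) (hbox j i))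
    simp [hij]
  have hdetL : (leadingMatrix (s · - 1) 0 A).det ≠ 0 := by
    rw [hL, Matrix.det_diagonal]
    exact Finset.prod_ne_zero_iff.2 fun j _ ↦ hdiag j
  have hdet : A.det ≠ 0 := det_ne_zero_of_det_leadingMatrix_ne_zero hbound hdetL
  have hle : A.det.order ≤ g.det.order := order_det_le_of_col_mem_lattice hv hdet
  rw [order_det_eq_of_det_leadingMatrix_ne_zero hbound hdetL] at hle
  simpa using hle

theorem IsAdmissible.sum_le_order_det_add (hs : IsAdmissible s (lattice F g))
    (hmax : ∀ j, ¬IsAdmissible (s - Pi.single j 1) (lattice F g)) :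
    ∑ i, s i ≤ g.det.order + d := by
  have hex (j : Fin d) : ∃ v ∈ lattice F g, v ∈ box (s - Pi.single j 1) ∧ v ∉ box s := by
    have hj := hmax j
    rw [isAdmissible_lattice_iff] at hj
    push Not at hj
    obtain ⟨v, hv, hbox, hv0⟩ := hj
    exact ⟨v, hv, hbox, fun hvs ↦ hv0 (isAdmissible_lattice_iff.1 hs v hv hvs)⟩
  choose v hv hbox hnot using hex
  exact sum_le_order_det_add_of_mem_box hv hbox hnot

theorem exists_isAdmissible_sum_eq (hg : g.det ≠ 0) :
    ∃ s, IsAdmissible s (lattice F g) ∧ ∑ i, s i = g.det.order + d := by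
  -- an admissible box of largest volume
  obtain ⟨_, ⟨s, hs, rfl⟩, hmin⟩ := Int.exists_least_of_bdd
    (P := fun n ↦ ∃ s, IsAdmissible s (lattice F g) ∧ ∑ i, s i = n)
    ⟨g.det.order + d, by rintro _ ⟨s, hs, rfl⟩; exact hs.order_det_add_le_sum hg⟩
    ((exists_isAdmissible_lattice hg).imp' _ fun s hs ↦ ⟨s, hs, rfl⟩)
  refine ⟨s, hs, (hs.sum_le_order_det_add fun j hj ↦ ?_).antisymm (hs.order_det_add_le_sum hg)⟩
  simpa using hmin _ ⟨_, hj, rfl⟩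

end Lattices

section AbsoluteValue

variable {Fq}

theorem one_lt_card_real : (1 : ℝ) < Fintype.card Fq :=
  Nat.one_lt_cast.2 Fintype.one_lt_card

theorem Kabs_eq_zpow {f : Kt Fq} (hf : f ≠ 0) : Kabs Fq f = (Fintype.card Fq : ℝ) ^ (-f.order) :=
  if_neg hf

theorem Kabs_le_zpow_iff {f : Kt Fq} {n : ℤ} :
    Kabs Fq f ≤ (Fintype.card Fq : ℝ) ^ n ↔ (-n : ℤ) ≤ f.orderTop := by
  obtain rfl | hf := eq_or_ne f 0
  · simpa [Kabs] using zpow_nonneg (Nat.cast_nonneg _) n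
  · rw [Kabs_eq_zpow hf, zpow_le_zpow_iff_right₀ one_lt_card_real,
      ← HahnSeries.order_eq_orderTop_of_ne_zero hf, WithTop.coe_le_coe, neg_le]

theorem setOf_forall_Kabs_le_zpow {d : ℕ} (n : Fin d → ℤ) :
    {v : Fin d → Kt Fq | ∀ i, Kabs Fq (v i) ≤ (Fintype.card Fq : ℝ) ^ n i} = box (-n) :=
  Set.ext fun _ ↦ forall_congr' fun _ ↦ Kabs_le_zpow_iff

theorem prod_zpow_eq_zpow_sum {ι G : Type*} [CommGroupWithZero G] {x : G} (hx : x ≠ 0)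
    (n : ι → ℤ) (s : Finset ι) : ∏ i ∈ s, x ^ n i = x ^ ∑ i ∈ s, n i := by
  classical
  induction s using Finset.induction_on with
  | empty => simp
  | insert i s hi ih => rw [Finset.prod_insert hi, Finset.sum_insert hi, zpow_add₀ hx, ih]

theorem Kabs_mul_zpow_neg {f : Kt Fq} (hf : f ≠ 0) (n : ℤ) :
    Kabs Fq f * (Fintype.card Fq : ℝ) ^ (-n) = (Fintype.card Fq : ℝ) ^ (-(f.order + n)) := by
  rw [Kabs_eq_zpow hf, ← zpow_add₀ (zero_lt_one.trans one_lt_card_real).ne', neg_add]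

end AbsoluteValue

theorem mordell_constant_general {d : ℕ} (g : Matrix (Fin d) (Fin d) (Kt Fq)) (hg : g.det ≠ 0) :
    (∃ r : Fin d → ℝ, (∀ i, ∃ n : ℤ, r i = (Fintype.card Fq : ℝ) ^ n) ∧
      ∏ i, r i = Kabs Fq g.det * (Fintype.card Fq : ℝ) ^ (-(d : ℤ)) ∧
      {v : Fin d → Kt Fq | ∀ i, Kabs Fq (v i) ≤ r i} ∩ lattice Fq g = {0}) ∧
    (∀ r : Fin d → ℝ, (∀ i, ∃ n : ℤ, r i = (Fintype.card Fq : ℝ) ^ n) →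
      Kabs Fq g.det * (Fintype.card Fq : ℝ) ^ (-(d : ℤ)) < ∏ i, r i →
      ∃ v ∈ lattice Fq g, v ≠ 0 ∧ ∀ i, Kabs Fq (v i) ≤ r i) := by
  have hq : (1 : ℝ) < Fintype.card Fq := one_lt_card_real
  have hq0 : (Fintype.card Fq : ℝ) ≠ 0 := (zero_lt_one.trans hq).ne'
  rw [Kabs_mul_zpow_neg hg]
  constructor
  · obtain ⟨s, hs, hsum⟩ := exists_isAdmissible_sum_eq hg
    refine ⟨fun i ↦ (Fintype.card Fq : ℝ) ^ (-s) i, fun i ↦ ⟨(-s) i, rfl⟩, ?_, ?_⟩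
    · rw [prod_zpow_eq_zpow_sum hq0, ← hsum, ← Finset.sum_neg_distrib]
      rfl
    · rwa [setOf_forall_Kabs_le_zpow (-s), neg_neg]
  · intro r hr hlt
    choose n hn using hr
    obtain rfl : r = fun i ↦ (Fintype.card Fq : ℝ) ^ n i := funext hn
    rw [prod_zpow_eq_zpow_sum hq0, zpow_lt_zpow_iff_right₀ hq] at hlt
    have hs : ∑ i, (-n) i < g.det.order + d := by
      simp only [Pi.neg_apply, Finset.sum_neg_distrib]
      linarith
    obtain ⟨v, hv, hv0, hbox⟩ := exists_ne_zero_mem_lattice_mem_box hg hs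
    exact ⟨v, hv, hv0, fun i ↦ Kabs_le_zpow_iff.2 (hbox i)⟩

/-- The Mordell constant of every unimodular lattice `Λ ⊆ K̃^d` equals
`q^{-d}`: there is an admissible box for `Λ` of volume `q^{-d}`, and every box of volume
strictly greater than `q^{-d}` contains a nonzero point of `Λ`.
In particular `MG_d = {q^{-d}}`. -/
theorem mordell_constant {d : ℕ} (hd : 2 ≤ d)
    (g : Matrix (Fin d) (Fin d) (Kt Fq)) (hg : Kabs Fq g.det = 1) :
    (∃ r : Fin d → ℝ, (∀ i, ∃ n : ℤ, r i = (Fintype.card Fq : ℝ) ^ n) ∧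
      ∏ i, r i = (Fintype.card Fq : ℝ) ^ (-(d : ℤ)) ∧
      {v : Fin d → Kt Fq | ∀ i, Kabs Fq (v i) ≤ r i} ∩ lattice Fq g = {0}) ∧
    (∀ r : Fin d → ℝ, (∀ i, ∃ n : ℤ, r i = (Fintype.card Fq : ℝ) ^ n) →
      (Fintype.card Fq : ℝ) ^ (-(d : ℤ)) < ∏ i, r i →
      ∃ v ∈ lattice Fq g, v ≠ 0 ∧ ∀ i, Kabs Fq (v i) ≤ r i) := by
  have hdet : g.det ≠ 0 := fun h0 ↦ by simp [Kabs, h0] at hg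
  simpa only [hg, one_mul] using mordell_constant_general Fq g hdet
end
end
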